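/- Let A, B, C ∈ ℝ² be affinely independent and let |T| denote the area of the triangle T with vertices A, B, C. Then there exist constants c₂ > 0 and c₃ > 0, depending only on A, B, C, such that for all values u(A), u(B), u(C) ∈ ℝ²: (‖u(A)−u(B)‖ − ‖A−B‖)² + (‖u(B)−u(C)‖ − ‖B−C‖)² ≥ c₂ ‖∇u‖² · |T| − c₃ |T|, where ∇u = (u(A)−u(B) | u(B)−u(C)) · (A−B | B−C)⁻¹ is the affine interpolation gradient. -/

import Mathlib

/-- The matrix with columns `v` and `w`. -/
noncomputable def colMat (v w : EuclideanSpace ℝ (Fin 2)) : Matrix (Fin 2) (Fin 2) ℝ :=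
  Matrix.of fun i j => ![v i, w i] j

/-- The affine interpolation gradient determined by the points `x₁, x₂, x₃` and the
values `u₁, u₂, u₃`: `(u₁−u₂ | u₂−u₃) · (x₁−x₂ | x₂−x₃)⁻¹`. -/
noncomputable def gradMat (x₁ x₂ x₃ u₁ u₂ u₃ : EuclideanSpace ℝ (Fin 2)) :
    Matrix (Fin 2) (Fin 2) ℝ :=
  colMat (u₁ - u₂) (u₂ - u₃) * (colMat (x₁ - x₂) (x₂ - x₃))⁻¹

/-- Squared Frobenius norm of a 2×2 matrix. -/
noncomputable def frobSq (M : Matrix (Fin 2) (Fin 2) ℝ) : ℝ :=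
  ∑ i, ∑ j, (M i j) ^ 2

/-- Area of the triangle with vertices `A`, `B`, `C`. -/
noncomputable def triArea (A B C : EuclideanSpace ℝ (Fin 2)) : ℝ :=
  (MeasureTheory.volume (convexHull ℝ {A, B, C})).toReal

lemma frobSq_mul_le (M N : Matrix (Fin 2) (Fin 2) ℝ) :
    frobSq (M * N) ≤ frobSq M * frobSq N := by
  simp only [frobSq, Matrix.mul_apply, Fin.sum_univ_two]
  nlinarith [sq_nonneg (M 0 0 * N 1 0 - M 0 1 * N 0 0), sq_nonneg (M 0 0 * N 1 1 - M 0 1 * N 0 1),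
    sq_nonneg (M 1 0 * N 1 0 - M 1 1 * N 0 0), sq_nonneg (M 1 0 * N 1 1 - M 1 1 * N 0 1)]

lemma frobSq_colMat (v w : EuclideanSpace ℝ (Fin 2)) :
    frobSq (colMat v w) = ‖v‖ ^ 2 + ‖w‖ ^ 2 := by
  simp [frobSq, colMat, EuclideanSpace.norm_sq_eq, Fin.sum_univ_two]
  ring

lemma frobSq_nonneg (M : Matrix (Fin 2) (Fin 2) ℝ) : 0 ≤ frobSq M := by
  unfold frobSq; positivity

/-- Lower bound for the spring energy of a triangle: for affinely independent
`A, B, C ∈ ℝ²` there are `c₂, c₃ > 0` depending only on `A, B, C` such that for all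
values `uA, uB, uC ∈ ℝ²`,
`(‖uA−uB‖ − ‖A−B‖)² + (‖uB−uC‖ − ‖B−C‖)² ≥ c₂ ‖∇u‖²·|T| − c₃ |T|`. -/
theorem triangle_energy_lower_bound (A B C : EuclideanSpace ℝ (Fin 2))
    (hABC : AffineIndependent ℝ ![A, B, C]) :
    ∃ c₂ c₃ : ℝ, 0 < c₂ ∧ 0 < c₃ ∧
      ∀ uA uB uC : EuclideanSpace ℝ (Fin 2),
        (‖uA - uB‖ - ‖A - B‖) ^ 2 + (‖uB - uC‖ - ‖B - C‖) ^ 2 ≥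
          c₂ * (frobSq (gradMat A B C uA uB uC) * triArea A B C) - c₃ * triArea A B C := by
  have ht : 0 ≤ triArea A B C := ENNReal.toReal_nonneg
  rcases ht.eq_or_lt with h0 | hpos
  · refine ⟨1, 1, one_pos, one_pos, fun uA uB uC => ?_⟩
    rw [← h0]
    simp only [mul_zero, sub_zero]
    positivity
  · set t := triArea A B C with htdef
    set N := (colMat (A - B) (B - C))⁻¹ with hN
    have hN0 := frobSq_nonneg N
    have hK : 0 < frobSq N + 1 := by linarith
    refine ⟨1 / (2 * (frobSq N + 1) * t), (‖A - B‖ ^ 2 + ‖B - C‖ ^ 2 + 1) / t,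
      by positivity, by positivity, fun uA uB uC => ?_⟩
    have h1 : frobSq (gradMat A B C uA uB uC) ≤
        (‖uA - uB‖ ^ 2 + ‖uB - uC‖ ^ 2) * (frobSq N + 1) := by
      have h := frobSq_mul_le (colMat (uA - uB) (uB - uC)) N
      rw [frobSq_colMat] at h
      have h' : frobSq (gradMat A B C uA uB uC) = frobSq (colMat (uA - uB) (uB - uC) * N) := rfl
      rw [h']
      nlinarith [sq_nonneg ‖uA - uB‖, sq_nonneg ‖uB - uC‖]
    have h2 : 1 / (2 * (frobSq N + 1) * t) * (frobSq (gradMat A B C uA uB uC) * t)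
        ≤ (‖uA - uB‖ ^ 2 + ‖uB - uC‖ ^ 2) / 2 := by
      have e : 1 / (2 * (frobSq N + 1) * t) * (frobSq (gradMat A B C uA uB uC) * t)
        = frobSq (gradMat A B C uA uB uC) / (2 * (frobSq N + 1)) := by
        field_simp
      rw [e, div_le_iff₀ (by positivity)]
      linarith
    have h3 : (‖A - B‖ ^ 2 + ‖B - C‖ ^ 2 + 1) / t * t = ‖A - B‖ ^ 2 + ‖B - C‖ ^ 2 + 1 :=
      div_mul_cancel₀ _ hpos.ne'
    rw [h3]
    nlinarith [sq_nonneg (‖uA - uB‖ - 2 * ‖A - B‖), sq_nonneg (‖uB - uC‖ - 2 * ‖B - C‖)]
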